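/- arXiv:1906.07169 — 2 statements merged into one kernel-verified Lean document; each statement's English description precedes it below -/
import Mathlib

section
/- For every fixed integer m ≥ 1, as d → 0⁺, F_m(e^{−d}) = Σ_{j=1}^∞ j^m e^{−jd}/(1 − e^{−jd}) ∼ d^{−m−1}·m!·ζ(m+1). -/
open Filter Asymptotics Topology

/-!
Expanding each `1 / (1 - xʲ)` as a geometric series and exchanging the summations turns the Lambert
series into `F_m(x) = ∑ k, Li₋ₘ(xᵏ)`, where `Li₋ₘ(x) = ∑ n, nᵐ xⁿ`. Comparing `nᵐ` with
`m! * choose (n + O(1)) m` traps `Li₋ₘ(x)` between `m! (x / (1 - x)) ^ (m + 1)` and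
`m! x / (1 - x) ^ (m + 1)`. Hence `t ^ (m + 1) * Li₋ₘ(e⁻ᵗ)` is bounded on `(0, ∞)` and tends to `m!`
as `t → 0⁺`, and dominated convergence in
`d ^ (m + 1) * F_m(e⁻ᵈ) = ∑ k, k ^ (-(m + 1)) * ((k d) ^ (m + 1) * Li₋ₘ(e⁻ᵏᵈ))`
gives the limit `m! ζ(m + 1)`.
-/

/-- The polylogarithm `Li₋ₘ(x) = ∑_{n ≥ 1} nᵐ xⁿ` of non-positive order `-m`, meaningful for
`‖x‖ < 1`. Summing over `ℕ+` keeps the term `n = 0` out of the case `m = 0`. -/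
noncomputable def negPolylog {𝕜 : Type*} [Semiring 𝕜] [TopologicalSpace 𝕜] (m : ℕ) (x : 𝕜) : 𝕜 :=
  ∑' n : ℕ+, (n : 𝕜) ^ m * x ^ (n : ℕ)

/-- The Lambert series `F_m(x) = ∑_{j ≥ 1} jᵐ xʲ / (1 - xʲ)`, meaningful for `‖x‖ < 1`. -/
noncomputable def lambertSeriesPow {𝕜 : Type*} [Field 𝕜] [TopologicalSpace 𝕜] (m : ℕ) (x : 𝕜) : 𝕜 :=
  ∑' j : ℕ+, (j : 𝕜) ^ m * x ^ (j : ℕ) / (1 - x ^ (j : ℕ))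

theorem lambertSeriesPow_eq_tsum_negPolylog_pow {𝕜 : Type*} [NontriviallyNormedField 𝕜]
    [CompleteSpace 𝕜] [NormSMulClass ℤ 𝕜] (m : ℕ) {x : 𝕜} (hx : ‖x‖ < 1) :
    lambertSeriesPow m x = ∑' k : ℕ+, negPolylog m (x ^ (k : ℕ)) := by
  simp only [lambertSeriesPow, negPolylog, ← pow_mul]
  rw [tsum_pow_div_one_sub_eq_tsum_sigma hx, tsum_prod_pow_eq_tsum_sigma m hx]

theorem summable_pnat_pow_mul_geometric {R : Type*} [NormedRing R] [HasSummableGeomSeries R] (m : ℕ)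
    {x : R} (hx : ‖x‖ < 1) : Summable fun n : ℕ+ ↦ (n : R) ^ m * x ^ (n : ℕ) :=
  summable_pnat_iff_summable_nat (f := fun n : ℕ ↦ (n : R) ^ m * x ^ n) |>.2
    (summable_pow_mul_geometric_of_norm_lt_one m hx)

theorem summable_pnat_one_div_pow {s : ℕ} (hs : 1 < s) : Summable fun k : ℕ+ ↦ 1 / (k : ℝ) ^ s :=
  summable_pnat_iff_summable_nat.2 (Real.summable_one_div_nat_pow.2 hs)

section NegPolylogBounds

variable (m : ℕ) {x : ℝ}

theorem negPolylog_nonneg (hx : 0 ≤ x) : 0 ≤ negPolylog m x :=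
  tsum_nonneg fun _ ↦ by positivity

theorem negPolylog_le (hx₀ : 0 ≤ x) (hx₁ : x < 1) :
    negPolylog m x ≤ m.factorial * x / (1 - x) ^ (m + 1) := by
  have hx : ‖x‖ < 1 := by rwa [Real.norm_of_nonneg hx₀]
  have hpow_le (j : ℕ) : ((j + 1 : ℕ) : ℝ) ^ m ≤ m.factorial * (j + m).choose m := by
    rw [← Nat.cast_mul, ← Nat.ascFactorial_eq_factorial_mul_choose]
    exact_mod_cast Nat.pow_succ_le_ascFactorial (j + 1) m
  have hsummable : Summable fun j : ℕ ↦ ((j + 1 : ℕ) : ℝ) ^ m * x ^ (j + 1) :=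
    summable_pnat_iff_summable_succ (f := fun n : ℕ ↦ (n : ℝ) ^ m * x ^ n) |>.1
      (summable_pnat_pow_mul_geometric m hx)
  calc negPolylog m x
      = ∑' j : ℕ, ((j + 1 : ℕ) : ℝ) ^ m * x ^ (j + 1) :=
        tsum_pnat_eq_tsum_succ (f := fun n : ℕ ↦ (n : ℝ) ^ m * x ^ n)
    _ ≤ ∑' j : ℕ, m.factorial * x * ((j + m).choose m * x ^ j) := by
        refine Summable.tsum_le_tsum (fun j ↦ ?_) hsummable
          ((summable_choose_mul_geometric_of_norm_lt_one m hx).mul_left _)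
        calc ((j + 1 : ℕ) : ℝ) ^ m * x ^ (j + 1)
            ≤ m.factorial * (j + m).choose m * x ^ (j + 1) := by gcongr; exact hpow_le j
          _ = m.factorial * x * ((j + m).choose m * x ^ j) := by ring
    _ = m.factorial * x / (1 - x) ^ (m + 1) := by
        rw [tsum_mul_left, tsum_choose_mul_geometric_of_norm_lt_one m hx, mul_one_div]

theorem le_negPolylog (hx₀ : 0 ≤ x) (hx₁ : x < 1) :
    m.factorial * (x / (1 - x)) ^ (m + 1) ≤ negPolylog m x := by
  have hx : ‖x‖ < 1 := by rwa [Real.norm_of_nonneg hx₀]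
  have hle_pow (j : ℕ) : (m.factorial * (j + m).choose m : ℝ) ≤ ((j + m + 1 : ℕ) : ℝ) ^ m := by
    rw [← Nat.cast_mul, ← Nat.descFactorial_eq_factorial_mul_choose]
    exact_mod_cast (Nat.descFactorial_le_pow _ _).trans (Nat.pow_le_pow_left (Nat.le_succ _) m)
  calc m.factorial * (x / (1 - x)) ^ (m + 1)
      = ∑' j : ℕ, m.factorial * x ^ (m + 1) * ((j + m).choose m * x ^ j) := by
        rw [tsum_mul_left, tsum_choose_mul_geometric_of_norm_lt_one m hx, div_pow]
        ring
    _ ≤ negPolylog m x := by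
        refine Summable.tsum_le_tsum_of_inj (fun j ↦ (j + m).succPNat)
          (Nat.succPNat_injective.comp (add_left_injective m)) (fun _ _ ↦ by positivity)
          (fun j ↦ ?_) ((summable_choose_mul_geometric_of_norm_lt_one m hx).mul_left _)
          (summable_pnat_pow_mul_geometric m hx)
        calc m.factorial * x ^ (m + 1) * ((j + m).choose m * x ^ j)
            = m.factorial * (j + m).choose m * x ^ (j + m + 1) := by ring
          _ ≤ ((j + m + 1 : ℕ) : ℝ) ^ m * x ^ (j + m + 1) := by gcongr; exact hle_pow j

end NegPolylogBounds

theorem mul_exp_neg_le_one_sub_exp_neg (t : ℝ) : t * Real.exp (-t) ≤ 1 - Real.exp (-t) := by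
  have h : (t + 1) * Real.exp (-t) ≤ Real.exp t * Real.exp (-t) := by
    gcongr
    exact Real.add_one_le_exp t
  rw [← Real.exp_add, add_neg_cancel, Real.exp_zero] at h
  linarith

theorem pow_mul_exp_neg_le (n : ℕ) {t : ℝ} (ht : 0 ≤ t) :
    t ^ n * Real.exp (-t) ≤ n ^ n * (1 - Real.exp (-t)) ^ n := by
  rcases n.eq_zero_or_pos with rfl | hn
  · simpa using ht
  have hn' : (1 : ℝ) ≤ n := by exact_mod_cast hn
  have hscaled : t * Real.exp (-(t / n)) ≤ n * (1 - Real.exp (-t)) := by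
    calc t * Real.exp (-(t / n)) = n * (t / n * Real.exp (-(t / n))) := by field_simp
      _ ≤ n * (1 - Real.exp (-(t / n))) := by
        gcongr
        exact mul_exp_neg_le_one_sub_exp_neg _
      _ ≤ n * (1 - Real.exp (-t)) := by
        gcongr
        exact div_le_self ht hn'
  calc t ^ n * Real.exp (-t) = (t * Real.exp (-(t / n))) ^ n := by
        rw [mul_pow, ← Real.exp_nat_mul]
        congr 2
        field_simp
    _ ≤ (n * (1 - Real.exp (-t))) ^ n := by gcongr
    _ = n ^ n * (1 - Real.exp (-t)) ^ n := mul_pow _ _ _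

theorem tendsto_div_one_sub_exp_neg :
    Tendsto (fun t : ℝ ↦ t / (1 - Real.exp (-t))) (𝓝[≠] 0) (𝓝 1) := by
  have hderiv : HasDerivAt (fun t : ℝ ↦ 1 - Real.exp (-t)) 1 0 := by
    simpa using ((hasDerivAt_neg (0 : ℝ)).exp.const_sub 1)
  simpa [slope_fun_def_field] using hderiv.tendsto_slope.inv₀ one_ne_zero

theorem tendsto_exp_neg_nhdsGT_zero : Tendsto (fun t : ℝ ↦ Real.exp (-t)) (𝓝[>] 0) (𝓝 1) := by
  have hcont : Continuous fun t : ℝ ↦ Real.exp (-t) := by fun_prop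
  simpa using (hcont.tendsto 0).mono_left nhdsWithin_le_nhds

section NegPolylogExpNeg

variable (m : ℕ)

theorem pow_mul_negPolylog_exp_neg_le {t : ℝ} (ht : 0 < t) :
    t ^ (m + 1) * negPolylog m (Real.exp (-t)) ≤ m.factorial * (m + 1 : ℕ) ^ (m + 1) := by
  have hexp : Real.exp (-t) < 1 := by simpa using ht
  have hpos : 0 < (1 - Real.exp (-t)) ^ (m + 1) := pow_pos (sub_pos.2 hexp) _
  calc t ^ (m + 1) * negPolylog m (Real.exp (-t))
      ≤ t ^ (m + 1) * (m.factorial * Real.exp (-t) / (1 - Real.exp (-t)) ^ (m + 1)) := by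
        gcongr
        exact negPolylog_le m (Real.exp_nonneg _) hexp
    _ = m.factorial * (t ^ (m + 1) * Real.exp (-t) / (1 - Real.exp (-t)) ^ (m + 1)) := by ring
    _ ≤ m.factorial * (m + 1 : ℕ) ^ (m + 1) := by
        gcongr
        exact (div_le_iff₀ hpos).2 (pow_mul_exp_neg_le (m + 1) ht.le)

theorem tendsto_pow_mul_negPolylog_exp_neg :
    Tendsto (fun t : ℝ ↦ t ^ (m + 1) * negPolylog m (Real.exp (-t))) (𝓝[>] 0)
      (𝓝 m.factorial) := by
  have hratio : Tendsto (fun t : ℝ ↦ t / (1 - Real.exp (-t))) (𝓝[>] 0) (𝓝 1) :=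
    tendsto_div_one_sub_exp_neg.mono_left (nhdsGT_le_nhdsNE 0)
  have hlower : Tendsto (fun t : ℝ ↦ m.factorial *
      (Real.exp (-t) ^ (m + 1) * (t / (1 - Real.exp (-t))) ^ (m + 1))) (𝓝[>] 0)
      (𝓝 m.factorial) := by
    simpa using ((tendsto_exp_neg_nhdsGT_zero.pow (m + 1)).mul
      (hratio.pow (m + 1))).const_mul (m.factorial : ℝ)
  have hupper : Tendsto (fun t : ℝ ↦ m.factorial *
      (Real.exp (-t) * (t / (1 - Real.exp (-t))) ^ (m + 1))) (𝓝[>] 0) (𝓝 m.factorial) := by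
    simpa using (tendsto_exp_neg_nhdsGT_zero.mul (hratio.pow (m + 1))).const_mul (m.factorial : ℝ)
  refine tendsto_of_tendsto_of_tendsto_of_le_of_le' hlower hupper ?_ ?_ <;>
    filter_upwards [self_mem_nhdsWithin] with t (ht : 0 < t)
  · calc m.factorial * (Real.exp (-t) ^ (m + 1) * (t / (1 - Real.exp (-t))) ^ (m + 1))
        = t ^ (m + 1) * (m.factorial * (Real.exp (-t) / (1 - Real.exp (-t))) ^ (m + 1)) := by
          ring
      _ ≤ t ^ (m + 1) * negPolylog m (Real.exp (-t)) := by
          gcongr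
          exact le_negPolylog m (Real.exp_nonneg _) (by simpa using ht)
  · calc t ^ (m + 1) * negPolylog m (Real.exp (-t))
        ≤ t ^ (m + 1) * (m.factorial * Real.exp (-t) / (1 - Real.exp (-t)) ^ (m + 1)) := by
          gcongr
          exact negPolylog_le m (Real.exp_nonneg _) (by simpa using ht)
      _ = m.factorial * (Real.exp (-t) * (t / (1 - Real.exp (-t))) ^ (m + 1)) := by
          rw [div_pow]
          ring

end NegPolylogExpNeg

theorem tendsto_pow_mul_tsum_comp_mul {g : ℝ → ℝ} {s : ℕ} {c C : ℝ} (hs : 1 < s)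
    (hlim : Tendsto (fun t ↦ t ^ s * g t) (𝓝[>] 0) (𝓝 c))
    (hbound : ∀ t, 0 < t → ‖t ^ s * g t‖ ≤ C) :
    Tendsto (fun d ↦ d ^ s * ∑' k : ℕ+, g (k * d)) (𝓝[>] 0)
      (𝓝 (c * ∑' k : ℕ+, 1 / (k : ℝ) ^ s)) := by
  have hscaled (k : ℕ+) (d : ℝ) :
      d ^ s * g (k * d) = 1 / (k : ℝ) ^ s * ((k * d) ^ s * g (k * d)) := by
    rw [mul_pow]
    field_simp
  rw [mul_comm c, ← tsum_mul_right]
  simp only [← tsum_mul_left, hscaled]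
  refine tendsto_tsum_of_dominated_convergence ((summable_pnat_one_div_pow hs).mul_right C)
    (fun k ↦ ?_) ?_
  · have hscale : Tendsto (fun d : ℝ ↦ k * d) (𝓝[>] 0) (𝓝[>] 0) := fun _ hU ↦
      eventually_nhdsGT_zero_mul_left (by positivity) hU
    exact (hlim.comp hscale).const_mul _
  · filter_upwards [self_mem_nhdsWithin] with d (hd : 0 < d) k
    rw [norm_mul, Real.norm_of_nonneg (by positivity)]
    gcongr
    exact hbound _ (by positivity)

theorem tendsto_pow_mul_lambertSeriesPow_exp_neg {m : ℕ} (hm : 1 ≤ m) :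
    Tendsto (fun d : ℝ ↦ d ^ (m + 1) * lambertSeriesPow m (Real.exp (-d))) (𝓝[>] 0)
      (𝓝 (m.factorial * ∑' k : ℕ+, 1 / (k : ℝ) ^ (m + 1))) := by
  have hbound (t : ℝ) (ht : 0 < t) : ‖t ^ (m + 1) * negPolylog m (Real.exp (-t))‖ ≤
      m.factorial * (m + 1 : ℕ) ^ (m + 1) := by
    have := negPolylog_nonneg m (Real.exp_nonneg (-t))
    rw [Real.norm_of_nonneg (by positivity)]
    exact pow_mul_negPolylog_exp_neg_le m ht
  refine (tendsto_pow_mul_tsum_comp_mul (Nat.lt_succ_of_le hm)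
    (tendsto_pow_mul_negPolylog_exp_neg m) hbound).congr' ?_
  filter_upwards [self_mem_nhdsWithin] with d (hd : 0 < d)
  have hexp : ‖Real.exp (-d)‖ < 1 := by simpa using hd
  simp only [lambertSeriesPow_eq_tsum_negPolylog_pow m hexp, ← Real.exp_nat_mul, mul_neg]

theorem isEquivalent_const_div_of_tendsto_mul {α 𝕜 : Type*} [NormedField 𝕜] {l : Filter α}
    {f g : α → 𝕜} {c : 𝕜} (hc : c ≠ 0) (hg : ∀ᶠ a in l, g a ≠ 0)
    (h : Tendsto (fun a ↦ g a * f a) l (𝓝 c)) : f ~[l] fun a ↦ c / g a := by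
  refine (((isEquivalent_const_iff_tendsto hc).2 h).div (IsEquivalent.refl (u := g))).congr_left ?_
  filter_upwards [hg] with a ha using mul_div_cancel_left₀ _ ha

theorem lambertSeriesPow_exp_neg_eq_tsum_succ (m : ℕ) (d : ℝ) :
    lambertSeriesPow m (Real.exp (-d)) = ∑' j : ℕ,
      (j + 1 : ℝ) ^ m * Real.exp (-(j + 1) * d) / (1 - Real.exp (-(j + 1) * d)) := by
  have hsucc := tsum_pnat_eq_tsum_succ
    (f := fun n : ℕ ↦ (n : ℝ) ^ m * Real.exp (-d) ^ n / (1 - Real.exp (-d) ^ n))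
  simpa only [← Real.exp_nat_mul, mul_neg, neg_mul, Nat.cast_add_one, lambertSeriesPow] using hsucc

/-- **Asymptotics of `F_m(e^{−d})`** (formula (31) of the paper): for every fixed `m ≥ 1`,
as `d → 0⁺`, `F_m(e^{−d}) = Σ_{j≥1} j^m e^{−jd}/(1 − e^{−jd}) ∼ d^{−m−1}·m!·ζ(m+1)`. -/
theorem Fm_at_saddle_asymptotics (m : ℕ) (hm : 1 ≤ m) :
    Asymptotics.IsEquivalent (nhdsWithin 0 (Set.Ioi 0))
      (fun d : ℝ =>
        ∑' j : ℕ, (j + 1 : ℝ) ^ m * Real.exp (-(j + 1) * d) / (1 - Real.exp (-(j + 1) * d)))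
      (fun d : ℝ =>
        ((m.factorial : ℝ) * ∑' j : ℕ, (1 : ℝ) / (j + 1) ^ (m + 1)) / d ^ (m + 1)) := by
  have hzeta_succ : ∑' k : ℕ+, 1 / (k : ℝ) ^ (m + 1) = ∑' j : ℕ, (1 : ℝ) / (j + 1) ^ (m + 1) := by
    simpa only [Nat.cast_add_one] using
      tsum_pnat_eq_tsum_succ (f := fun n : ℕ ↦ 1 / (n : ℝ) ^ (m + 1))
  have hzeta_pos : 0 < ∑' k : ℕ+, 1 / (k : ℝ) ^ (m + 1) :=
    (summable_pnat_one_div_pow (Nat.lt_succ_of_le hm)).tsum_pos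
      (fun _ ↦ by positivity) 1 (by positivity)
  simp only [← lambertSeriesPow_exp_neg_eq_tsum_succ, ← hzeta_succ]
  have hpow_ne : ∀ᶠ d : ℝ in 𝓝[>] 0, d ^ (m + 1) ≠ 0 := by
    filter_upwards [self_mem_nhdsWithin] with d hd using pow_ne_zero _ (ne_of_gt hd)
  exact isEquivalent_const_div_of_tendsto_mul (by positivity) hpow_ne
    (tendsto_pow_mul_lambertSeriesPow_exp_neg hm)
end

section
/- Let d_n be the unique positive solution of Σ_{j=1}^∞ j·e^{−jd}/(1 − e^{−jd}) = n, and let b_n = Σ_{j=1}^∞ j²·e^{−j d_n}/(1 − e^{−j d_n})². Then, as n → ∞, p(n) ∼ e^{n d_n}·g(e^{−d_n}) / √(2π·b_n). -/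
open Filter Asymptotics Topology

/-- `aFun d = Σ_{j≥1} j·e^{−jd}/(1 − e^{−jd})`. -/
noncomputable def aFun (d : ℝ) : ℝ :=
  ∑' j : ℕ, (j + 1 : ℝ) * Real.exp (-(j + 1) * d) / (1 - Real.exp (-(j + 1) * d))

/-- `bFun d = Σ_{j≥1} j²·e^{−jd}/(1 − e^{−jd})²`. -/
noncomputable def bFun (d : ℝ) : ℝ :=
  ∑' j : ℕ, (j + 1 : ℝ) ^ 2 * Real.exp (-(j + 1) * d) / (1 - Real.exp (-(j + 1) * d)) ^ 2

/-- `gR x = ∏_{j≥1} (1 − x^j)⁻¹`, the Euler partition generating function, for `|x| < 1`. -/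
noncomputable def gR (x : ℝ) : ℝ := ∏' j : ℕ, (1 - x ^ (j + 1))⁻¹

/-!
For `‖z‖ < 1`, Euler's product is the exponential of `∑ z ^ (j * k) / k` over `j, k ≥ 1`. On the
circle of radius `e ^ (-d)` this is, up to its value at `θ = 0`, the logarithm of the characteristic
function of a compound Poisson variable with jumps `j * k` at rates `e ^ (-j k d) / k`, of mean
`aFun d` and variance `bFun d`. Choosing `aFun d = n` centres the variable in Cauchy's formula
for `p(n)`. As `d → 0⁺` the variance grows like `d ^ (-3)` and the third moment only like
`d ^ (-4)`, so Lyapunov's condition gives a Gaussian limit after rescaling by `√(bFun d)`. The terms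
with `k = 1` form a geometric series, whose closed form bounds the integrand by a multiple of
`(1 + t ^ 2)⁻¹`; dominated convergence turns Cauchy's integral into the Gaussian one.
-/

section FourierCoefficient

open Complex

lemma integral_exp_int_mul_I (k : ℤ) :
    ∫ θ in (-Real.pi)..Real.pi, exp (k * θ * I) = if k = 0 then 2 * (Real.pi : ℂ) else 0 := by
  split_ifs with hk
  · subst hk
    simp only [Int.cast_zero, zero_mul, exp_zero, intervalIntegral.integral_const, real_smul,
      mul_one]
    push_cast
    ring
  · have hkI : (k : ℂ) * I ≠ 0 := mul_ne_zero (by exact_mod_cast hk) I_ne_zero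
    have periodic : exp (k * I * (Real.pi : ℂ)) = exp (k * I * ((-Real.pi : ℝ) : ℂ)) :=
      exp_eq_exp_iff_exists_int.2 ⟨k, by push_cast; ring⟩
    simp_rw [mul_right_comm _ _ I]
    rw [integral_exp_mul_complex hkI, periodic, sub_self, zero_div]

lemma integral_tsum_mul_exp_neg {a : ℕ → ℂ} {r : ℂ} (ha : Summable fun k ↦ ‖a k * r ^ k‖) (n : ℕ) :
    ∫ θ in (-Real.pi)..Real.pi, (∑' k, a k * (r * exp (θ * I)) ^ k) * exp (-n * θ * I) =
      2 * Real.pi * (a n * r ^ n) := by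
  have norm_term (k : ℕ) (θ : ℝ) :
      ‖a k * (r * exp (θ * I)) ^ k * exp (-n * θ * I)‖ = ‖a k * r ^ k‖ := by
    have unit : ‖exp (-n * θ * I)‖ = 1 := by
      exact_mod_cast norm_exp_ofReal_mul_I (-n * θ)
    rw [norm_mul, unit, mul_one, mul_pow, norm_mul, norm_mul, norm_mul, norm_pow (exp _),
      norm_exp_ofReal_mul_I, one_pow, mul_one]
  have integral_term (k : ℕ) :
      ∫ θ in (-Real.pi)..Real.pi, a k * (r * exp (θ * I)) ^ k * exp (-n * θ * I) =
        a k * r ^ k * if (k : ℤ) - n = 0 then 2 * (Real.pi : ℂ) else 0 := by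
    rw [← integral_exp_int_mul_I, ← intervalIntegral.integral_const_mul]
    congr 1 with θ
    rw [mul_pow, ← exp_nat_mul, mul_assoc, mul_assoc, mul_assoc, ← exp_add]
    push_cast
    ring_nf
  have hasSum_integrand (θ : ℝ) : HasSum (fun k ↦ a k * (r * exp (θ * I)) ^ k * exp (-n * θ * I))
      ((∑' k, a k * (r * exp (θ * I)) ^ k) * exp (-n * θ * I)) := by
    have summable_boundary : Summable fun k ↦ a k * (r * exp (θ * I)) ^ k :=
      .of_norm (by simpa [mul_pow, norm_exp_ofReal_mul_I] using ha)
    exact summable_boundary.hasSum.mul_right _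
  have termwise : HasSum
      (fun k ↦ ∫ θ in (-Real.pi)..Real.pi, a k * (r * exp (θ * I)) ^ k * exp (-n * θ * I))
      (∫ θ in (-Real.pi)..Real.pi, (∑' k, a k * (r * exp (θ * I)) ^ k) * exp (-n * θ * I)) := by
    apply intervalIntegral.hasSum_integral_of_dominated_convergence (fun k _ ↦ ‖a k * r ^ k‖)
    · exact fun k ↦ Continuous.aestronglyMeasurable (by fun_prop)
    · exact fun k ↦ .of_forall fun θ _ ↦ (norm_term k θ).le
    · exact .of_forall fun _ _ ↦ ha
    · exact intervalIntegrable_const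
    · exact .of_forall fun θ _ ↦ hasSum_integrand θ
  rw [← termwise.tsum_eq, tsum_congr integral_term, tsum_eq_single n]
  · simp only [sub_self, if_true]
    ring
  · intro k hk
    rw [if_neg (by lia), mul_zero]

end FourierCoefficient

section Rescaling

open MeasureTheory

variable {α E : Type*} [NormedAddCommGroup E] [NormedSpace ℝ E]

/- Substituting `t = σ a * θ` turns the left side into an integral over `[-A * σ a, A * σ a]`,
which exhausts the line. -/
lemma tendsto_smul_integral_of_rescaled_dominated {l : Filter α} [l.IsCountablyGenerated]
    {φ : α → ℝ → E} {σ : α → ℝ} {ψ : ℝ → E} {G : ℝ → ℝ} {A : ℝ} (hA : 0 < A)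
    (hσ : Tendsto σ l atTop) (hφ : ∀ᶠ a in l, Continuous (φ a)) (hG : Integrable G)
    (hbound : ∀ᶠ a in l, ∀ θ, |θ| ≤ A → ‖φ a θ‖ ≤ G (σ a * θ))
    (hlim : ∀ t, Tendsto (fun a ↦ φ a (t / σ a)) l (𝓝 (ψ t))) :
    Tendsto (fun a ↦ σ a • ∫ θ in -A..A, φ a θ) l (𝓝 (∫ t, ψ t)) := by
  let window (a : α) : Set ℝ := Set.Ioc (-A * σ a) (A * σ a)
  let rescaled (a : α) : ℝ → E := (window a).indicator fun t ↦ φ a (t / σ a)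
  have rescaled_of_mem {a : α} {t : ℝ} (ht : t ∈ window a) : rescaled a t = φ a (t / σ a) :=
    Set.indicator_of_mem ht _
  have hσ_pos : ∀ᶠ a in l, 0 < σ a := hσ.eventually_gt_atTop 0
  have integral_rescaled : ∀ᶠ a in l, ∫ t, rescaled a t = σ a • ∫ θ in -A..A, φ a θ := by
    filter_upwards [hσ_pos] with a ha
    rw [integral_indicator measurableSet_Ioc, ← intervalIntegral.integral_of_le (by nlinarith),
      intervalIntegral.integral_comp_div _ ha.ne', mul_div_cancel_right₀ _ ha.ne',
      mul_div_cancel_right₀ _ ha.ne']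
  refine Tendsto.congr' integral_rescaled <|
    tendsto_integral_filter_of_dominated_convergence (fun t ↦ ‖G t‖) ?_ ?_ hG.norm ?_
  · filter_upwards [hφ] with a ha
    exact (ha.comp (continuous_id.div_const _)).aestronglyMeasurable.indicator measurableSet_Ioc
  · filter_upwards [hσ_pos, hbound] with a ha hb
    refine .of_forall fun t ↦ ?_
    by_cases ht : t ∈ window a
    · have htA : |t / σ a| ≤ A := by
        rw [abs_div, abs_of_pos ha, div_le_iff₀ ha, abs_le, ← neg_mul]
        exact ⟨ht.1.le, ht.2⟩
      have h := hb _ htA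
      rw [mul_div_cancel₀ _ ha.ne'] at h
      rw [rescaled_of_mem ht]
      exact h.trans (le_abs_self _)
    · rw [show rescaled a t = 0 from Set.indicator_of_notMem ht _, norm_zero]
      exact norm_nonneg _
  · refine .of_forall fun t ↦ (hlim t).congr' ?_
    filter_upwards [hσ.eventually_gt_atTop (|t| / A)] with a ha
    rw [div_lt_iff₀ hA, mul_comm] at ha
    have ht : t ∈ window a := ⟨by linarith [(abs_lt.1 ha).1], (abs_lt.1 ha).2.le⟩
    exact (rescaled_of_mem ht).symm

end Rescaling

section CompoundPoisson

open Complex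

variable {ι : Type*} {w m : ι → ℝ}

/-- The `p`-th moment of the sizes `m` under the (not necessarily normalised) weights `w`. -/
noncomputable def weightedMoment (w m : ι → ℝ) (p : ℕ) : ℝ := ∑' x, m x ^ p * w x

/-- The logarithm of the characteristic function of a centred compound Poisson variable, whose
jumps of size `m x` occur at rate `w x`. -/
noncomputable def centeredExponent (w m : ι → ℝ) (θ : ℝ) : ℂ :=
  ∑' x, (w x : ℂ) * (exp (m x * θ * I) - 1 - m x * θ * I)

lemma weightedMoment_nonneg (hw0 : 0 ≤ w) (hm0 : 0 ≤ m) (p : ℕ) : 0 ≤ weightedMoment w m p :=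
  tsum_nonneg fun x ↦ mul_nonneg (pow_nonneg (hm0 x) p) (hw0 x)

lemma norm_exp_sub_taylor_two_le (y : ℝ) :
    ‖exp (y * I) - 1 - y * I + y ^ 2 / 2‖ ≤ 4 * |y| ^ 3 := by
  have norm_yI : ‖(y : ℂ) * I‖ = |y| := by simp
  rcases le_total |y| 1 with hy | hy
  · have taylor : exp (y * I) - 1 - y * I + y ^ 2 / 2 =
        exp (y * I) - ∑ k ∈ Finset.range 3, (y * I) ^ k / (k.factorial : ℂ) := by
      simp [Finset.sum_range_succ, mul_pow]
      ring
    have exp_le : Real.exp |y| ≤ 4 :=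
      (Real.exp_le_exp.2 hy).trans (by linarith [Real.exp_one_lt_d9])
    calc ‖exp (y * I) - 1 - y * I + y ^ 2 / 2‖ ≤ |y| ^ 3 * Real.exp |y| := by
          rw [taylor, ← norm_yI]
          exact norm_exp_sub_sum_le_norm_mul_exp _ 3
      _ ≤ |y| ^ 3 * 4 := by gcongr
      _ = 4 * |y| ^ 3 := mul_comm _ _
  · have norm_sq : ‖(y : ℂ) ^ 2 / 2‖ = |y| ^ 2 / 2 := by simp
    have one_le_sq : 1 ≤ |y| ^ 2 := one_le_pow₀ hy
    have sq_le_cube : |y| ^ 2 ≤ |y| ^ 3 := pow_le_pow_right₀ hy (by norm_num)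
    calc ‖exp (y * I) - 1 - y * I + y ^ 2 / 2‖ ≤ ‖exp (y * I)‖ + ‖(1 : ℂ)‖ + ‖y * I‖
          + ‖(y : ℂ) ^ 2 / 2‖ :=
          norm_add_le_of_le (norm_sub_le_of_le (norm_sub_le _ _) le_rfl) le_rfl
      _ = 2 + |y| + |y| ^ 2 / 2 := by
          rw [norm_exp_ofReal_mul_I, norm_one, norm_yI, norm_sq]
          ring
      _ ≤ 4 * |y| ^ 3 := by nlinarith

lemma summable_ofReal_mul_exp (hw : Summable w) (θ : ℝ) :
    Summable fun x ↦ (w x : ℂ) * exp (m x * θ * I) := by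
  refine .of_norm (hw.norm.congr fun x ↦ ?_)
  rw [norm_mul, ← ofReal_mul, norm_exp_ofReal_mul_I, mul_one, norm_real]

lemma hasSum_centeredExponent (hw : Summable w) (hmw : Summable fun x ↦ m x * w x) (θ : ℝ) :
    HasSum (fun x ↦ (w x : ℂ) * (exp (m x * θ * I) - 1 - m x * θ * I))
      (centeredExponent w m θ) := by
  have summable_linear := (summable_ofReal.2 hmw).mul_right ((θ : ℂ) * I)
  have summable_centered :=
    ((summable_ofReal_mul_exp (m := m) hw θ).sub (summable_ofReal.2 hw)).sub summable_linear
  refine (summable_centered.congr fun x ↦ ?_).hasSum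
  push_cast
  ring

lemma tsum_ofReal_mul_exp (hw : Summable w) (hmw : Summable fun x ↦ m x * w x) (θ : ℝ) :
    ∑' x, (w x : ℂ) * exp (m x * θ * I) =
      centeredExponent w m θ + weightedMoment w m 0 + weightedMoment w m 1 * (θ * I) := by
  have mass : HasSum (fun x ↦ (w x : ℂ)) (weightedMoment w m 0) := by
    simpa [weightedMoment] using hasSum_ofReal.2 hw.hasSum
  have mean : HasSum (fun x ↦ ((m x * w x : ℝ) : ℂ)) (weightedMoment w m 1) := by
    simpa [weightedMoment] using hasSum_ofReal.2 hmw.hasSum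
  rw [← (((hasSum_centeredExponent hw hmw θ).add mass).add (mean.mul_right (θ * I))).tsum_eq]
  refine tsum_congr fun x ↦ ?_
  push_cast
  ring

lemma continuous_centeredExponent (hw : Summable w) (hmw : Summable fun x ↦ m x * w x) :
    Continuous (centeredExponent w m) := by
  have centeredExponent_eq : centeredExponent w m = fun θ : ℝ ↦
      (∑' x, (w x : ℂ) * exp (m x * θ * I)) - weightedMoment w m 0 -
        weightedMoment w m 1 * (θ * I) := by
    ext θ
    rw [tsum_ofReal_mul_exp hw hmw]
    ring
  have continuous_sum : Continuous fun θ : ℝ ↦ ∑' x, (w x : ℂ) * exp (m x * θ * I) := by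
    refine continuous_tsum (fun x ↦ by fun_prop) hw.norm fun x θ ↦ ?_
    rw [norm_mul, ← ofReal_mul, norm_exp_ofReal_mul_I, mul_one, norm_real]
  rw [centeredExponent_eq]
  fun_prop

lemma norm_exp_centeredExponent (hw : Summable w) (hmw : Summable fun x ↦ m x * w x) (θ : ℝ) :
    ‖exp (centeredExponent w m θ)‖ = Real.exp (-∑' x, w x * (1 - Real.cos (m x * θ))) := by
  rw [norm_exp, ← (hasSum_re (hasSum_centeredExponent hw hmw θ)).tsum_eq, ← tsum_neg]
  congr 2 with x
  rw [re_ofReal_mul, ← ofReal_mul, sub_re, sub_re, exp_ofReal_mul_I_re, one_re, re_ofReal_mul,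
    I_re]
  ring

lemma norm_centeredExponent_add_le (hw0 : 0 ≤ w) (hm0 : 0 ≤ m)
    (hmom : ∀ p, Summable fun x ↦ m x ^ p * w x) (θ : ℝ) :
    ‖centeredExponent w m θ + weightedMoment w m 2 * θ ^ 2 / 2‖ ≤
      4 * weightedMoment w m 3 * |θ| ^ 3 := by
  have hw : Summable w := by simpa using hmom 0
  have hmw : Summable fun x ↦ m x * w x := by simpa using hmom 1
  have variance : HasSum (fun x ↦ ((m x ^ 2 * w x : ℝ) : ℂ)) (weightedMoment w m 2) :=
    hasSum_ofReal.2 (hmom 2).hasSum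
  have expansion := (hasSum_centeredExponent hw hmw θ).add
    (variance.mul_right ((θ : ℂ) ^ 2 / 2))
  have third : HasSum (fun x ↦ m x ^ 3 * w x * (4 * |θ| ^ 3)) (weightedMoment w m 3 * _) :=
    (hmom 3).hasSum.mul_right _
  rw [mul_div_assoc, ← expansion.tsum_eq]
  refine (tsum_of_norm_bounded third fun x ↦ ?_).trans_eq (by ring)
  calc _ = ‖(w x : ℂ) * (exp ((m x * θ : ℝ) * I) - 1 - (m x * θ : ℝ) * I
          + ((m x * θ : ℝ) : ℂ) ^ 2 / 2)‖ := by
        congr 1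
        push_cast
        ring
    _ ≤ w x * (4 * |m x * θ| ^ 3) := by
        rw [norm_mul, Complex.norm_of_nonneg (hw0 x)]
        exact mul_le_mul_of_nonneg_left (norm_exp_sub_taylor_two_le _) (hw0 x)
    _ = m x ^ 3 * w x * (4 * |θ| ^ 3) := by
        rw [abs_mul, abs_of_nonneg (hm0 x)]
        ring

/- This is Lyapunov's central limit theorem for compound Poisson variables. -/
lemma tendsto_exp_centeredExponent_div {α : Type*} {l : Filter α} {w : α → ι → ℝ}
    (hw0 : ∀ a, 0 ≤ w a) (hm0 : 0 ≤ m) (hmom : ∀ᶠ a in l, ∀ p, Summable fun x ↦ m x ^ p * w a x)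
    (hvar : ∀ᶠ a in l, 0 < weightedMoment (w a) m 2)
    (hlyapunov : Tendsto (fun a ↦ weightedMoment (w a) m 3 / √(weightedMoment (w a) m 2) ^ 3)
      l (𝓝 0)) (t : ℝ) :
    Tendsto (fun a ↦ exp (centeredExponent (w a) m (t / √(weightedMoment (w a) m 2)))) l
      (𝓝 (Real.exp (-(1 / 2) * t ^ 2) : ℝ)) := by
  rw [ofReal_exp]
  refine (continuous_exp.tendsto _).comp (tendsto_iff_norm_sub_tendsto_zero.2 ?_)
  have error_tendsto := hlyapunov.const_mul (4 * |t| ^ 3)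
  rw [mul_zero] at error_tendsto
  refine squeeze_zero' (.of_forall fun _ ↦ norm_nonneg _) ?_ error_tendsto
  filter_upwards [hmom, hvar] with a ha hpos
  set v := weightedMoment (w a) m 2
  have hsq : ((√v : ℝ) : ℂ) ^ 2 = v := by exact_mod_cast Real.sq_sqrt hpos.le
  have hv : (v : ℂ) ≠ 0 := by exact_mod_cast hpos.ne'
  have quadratic : (v : ℂ) * ((t / √v : ℝ) : ℂ) ^ 2 / 2 = -((-(1 / 2) * t ^ 2 : ℝ) : ℂ) := by
    push_cast
    rw [div_pow, hsq]
    field_simp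
  have h := norm_centeredExponent_add_le (hw0 a) hm0 ha (t / √v)
  rw [quadratic, ← sub_eq_add_neg] at h
  refine h.trans_eq ?_
  rw [abs_div, abs_of_nonneg (Real.sqrt_nonneg v)]
  ring

end CompoundPoisson

section PartitionGeneratingFunction

open PowerSeries
open scoped PowerSeries.WithPiTopology

section AbsoluteEvaluation

variable {𝕜 : Type*} [NormedField 𝕜]

/-- The power series `P` converges absolutely at `z`, with sum `s`. -/
def HasAbsEval (P : 𝕜⟦X⟧) (z s : 𝕜) : Prop :=
  Summable (fun n ↦ ‖coeff n P * z ^ n‖) ∧ HasSum (fun n ↦ coeff n P * z ^ n) s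

lemma hasAbsEval_one (z : 𝕜) : HasAbsEval 1 z 1 := by
  have coeff_eq_zero (n : ℕ) (hn : n ≠ 0) : coeff n (1 : 𝕜⟦X⟧) * z ^ n = 0 := by
    rw [coeff_one, if_neg hn, zero_mul]
  have h := hasSum_single 0 coeff_eq_zero
  refine ⟨(hasSum_single 0 fun n hn ↦ ?_).summable, by simpa using h⟩
  rw [coeff_eq_zero n hn, norm_zero]

lemma coeff_tsum_X_pow_mul {k : ℕ} (hk : 0 < k) (n : ℕ) :
    coeff n (∑' j : ℕ, (X : 𝕜⟦X⟧) ^ (k * j)) = if k ∣ n then 1 else 0 := by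
  suffices h : HasSum (fun j : ℕ ↦ (X : 𝕜⟦X⟧) ^ (k * j))
      (PowerSeries.mk fun n ↦ if k ∣ n then 1 else 0) by
    rw [h.tsum_eq, coeff_mk]
  rw [PowerSeries.WithPiTopology.hasSum_iff_hasSum_coeff]
  intro n
  simp only [coeff_mk, coeff_X_pow]
  split_ifs with h
  · obtain ⟨c, rfl⟩ := h
    simpa only [mul_right_inj' hk.ne', eq_comm] using hasSum_ite_eq c (1 : 𝕜)
  · have ne_multiple (j : ℕ) : n ≠ k * j := fun hj ↦ h ⟨j, hj⟩
    simpa only [if_neg (ne_multiple _)] using hasSum_zero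

lemma hasAbsEval_tsum_X_pow_mul {k : ℕ} (hk : 0 < k) {z : 𝕜} (hz : ‖z‖ < 1) :
    HasAbsEval (∑' j : ℕ, X ^ (k * j)) z (1 - z ^ k)⁻¹ := by
  have mul_injective : Function.Injective fun j : ℕ ↦ k * j := mul_right_injective₀ hk.ne'
  have term_multiple (j : ℕ) :
      (if k ∣ k * j then (1 : 𝕜) else 0) * z ^ (k * j) = (z ^ k) ^ j := by
    rw [if_pos (dvd_mul_right k j), one_mul, pow_mul]
  have term_eq_zero (n : ℕ) (hn : n ∉ Set.range fun j : ℕ ↦ k * j) :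
      (if k ∣ n then (1 : 𝕜) else 0) * z ^ n = 0 := by
    rw [if_neg fun ⟨j, hj⟩ ↦ hn ⟨j, hj.symm⟩, zero_mul]
  have norm_pow_lt : ‖z ^ k‖ < 1 := by
    rw [norm_pow]
    exact pow_lt_one₀ (norm_nonneg z) hz hk.ne'
  simp only [HasAbsEval, coeff_tsum_X_pow_mul hk]
  refine ⟨?_, ?_⟩
  · rw [← mul_injective.summable_iff fun n hn ↦ by rw [term_eq_zero n hn, norm_zero]]
    simpa only [Function.comp_def, term_multiple, norm_pow] using
      summable_geometric_of_lt_one (norm_nonneg _) norm_pow_lt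
  · rw [← mul_injective.hasSum_iff term_eq_zero]
    simpa only [Function.comp_def, term_multiple] using
      hasSum_geometric_of_norm_lt_one norm_pow_lt

variable [CompleteSpace 𝕜]

lemma HasAbsEval.mul {P Q : 𝕜⟦X⟧} {z s t : 𝕜} (hP : HasAbsEval P z s) (hQ : HasAbsEval Q z t) :
    HasAbsEval (P * Q) z (s * t) := by
  have coeff_mul_pow (n : ℕ) : coeff n (P * Q) * z ^ n =
      ∑ kl ∈ Finset.HasAntidiagonal.antidiagonal n,
        (coeff kl.1 P * z ^ kl.1) * (coeff kl.2 Q * z ^ kl.2) := by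
    rw [coeff_mul, Finset.sum_mul]
    refine Finset.sum_congr rfl fun kl hkl ↦ ?_
    rw [← Finset.HasAntidiagonal.mem_antidiagonal.1 hkl]
    ring
  have summable_norm : Summable fun n ↦ ‖coeff n (P * Q) * z ^ n‖ := by
    simpa only [coeff_mul_pow] using
      summable_norm_sum_mul_antidiagonal_of_summable_norm hP.1 hQ.1
  refine ⟨summable_norm, ?_⟩
  rw [← hP.2.tsum_eq, ← hQ.2.tsum_eq,
    tsum_mul_tsum_eq_tsum_sum_antidiagonal_of_summable_norm hP.1 hQ.1, ← tsum_congr coeff_mul_pow]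
  exact summable_norm.of_norm.hasSum

lemma HasAbsEval.prod {ι : Type*} {P : ι → 𝕜⟦X⟧} {z : 𝕜} {s : ι → 𝕜} (I : Finset ι)
    (h : ∀ i ∈ I, HasAbsEval (P i) z (s i)) : HasAbsEval (∏ i ∈ I, P i) z (∏ i ∈ I, s i) := by
  classical
  induction I using Finset.induction_on with
  | empty => simpa using hasAbsEval_one z
  | insert i I hi ih =>
    rw [Finset.prod_insert hi, Finset.prod_insert hi]
    exact (h i (Finset.mem_insert_self i I)).mul
      (ih fun j hj ↦ h j (Finset.mem_insert_of_mem hj))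

lemma hasAbsEval_card_restricted_le (M : ℕ) {z : 𝕜} (hz : ‖z‖ < 1) :
    HasAbsEval (PowerSeries.mk fun n ↦ ((Nat.Partition.restricted n (· ≤ M)).card : 𝕜)) z
      (∏ i ∈ Finset.range M, (1 - z ^ (i + 1))⁻¹) := by
  have formal_product := Nat.Partition.hasProd_powerSeriesMk_card_restricted 𝕜 (· ≤ M)
  have finite_product : ∀ i ∉ Finset.range M,
      (if i + 1 ≤ M then ∑' j : ℕ, (X : 𝕜⟦X⟧) ^ ((i + 1) * j) else 1) = 1 := fun i hi ↦
    if_neg fun h ↦ hi (Finset.mem_range.2 h)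
  rw [formal_product.unique (hasProd_prod_of_ne_finset_one finite_product)]
  refine HasAbsEval.prod _ fun i hi ↦ ?_
  rw [if_pos (show i + 1 ≤ M from Finset.mem_range.1 hi)]
  exact hasAbsEval_tsum_X_pow_mul i.succ_pos hz

end AbsoluteEvaluation

lemma card_restricted_le_of_le {n M : ℕ} (h : n ≤ M) :
    (Nat.Partition.restricted n (· ≤ M)).card = Fintype.card n.Partition := by
  rw [← Finset.card_univ]
  congr 1
  exact Finset.filter_true_of_mem fun p _ i hi ↦ (p.le_of_mem_parts hi).trans h

lemma sum_card_partition_mul_pow_le (K : ℕ) {r : ℝ} (hr0 : 0 ≤ r) (hr1 : r < 1) :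
    ∑ n ∈ Finset.range K, (Fintype.card n.Partition : ℝ) * r ^ n ≤
      ∏ i ∈ Finset.range K, (1 - r ^ (i + 1))⁻¹ := by
  have hr : ‖r‖ < 1 := by rwa [Real.norm_of_nonneg hr0]
  have hsum := (hasAbsEval_card_restricted_le K hr).2
  simp only [coeff_mk] at hsum
  refine le_of_eq_of_le (Finset.sum_congr rfl fun n hn ↦ ?_)
    (sum_le_hasSum (Finset.range K) (fun n _ ↦ by positivity) hsum)
  rw [card_restricted_le_of_le (Finset.mem_range.1 hn).le]

/-- The logarithm of Euler's product `∏ (1 - z ^ j)⁻¹` is the sum of these terms, indexed by the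
pairs `(j - 1, k - 1)` with `j, k ≥ 1`. -/
noncomputable def eulerLogTerm (z : ℂ) (x : ℕ × ℕ) : ℂ :=
  z ^ ((x.1 + 1) * (x.2 + 1)) / (x.2 + 1)

lemma summable_eulerLogTerm {z : ℂ} (hz : ‖z‖ < 1) : Summable (eulerLogTerm z) := by
  have geometric : Summable fun j : ℕ ↦ ‖z‖ ^ j :=
    summable_geometric_of_lt_one (norm_nonneg z) hz
  refine .of_norm_bounded (geometric.mul_of_nonneg geometric (fun _ ↦ by positivity)
    fun _ ↦ by positivity) fun x ↦ ?_
  have one_le : (1 : ℝ) ≤ ‖(x.2 : ℂ) + 1‖ := by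
    rw [← Nat.cast_succ, Complex.norm_natCast]
    exact_mod_cast x.2.succ_pos
  calc ‖eulerLogTerm z x‖ ≤ ‖z‖ ^ ((x.1 + 1) * (x.2 + 1)) := by
        rw [eulerLogTerm, norm_div, norm_pow]
        exact div_le_self (by positivity) one_le
    _ ≤ ‖z‖ ^ (x.1 + x.2) := pow_le_pow_of_le_one (norm_nonneg z) hz.le (by nlinarith)
    _ = ‖z‖ ^ x.1 * ‖z‖ ^ x.2 := pow_add _ _ _

lemma hasProd_inv_one_sub_pow {z : ℂ} (hz : ‖z‖ < 1) :
    HasProd (fun i : ℕ ↦ (1 - z ^ (i + 1))⁻¹) (Complex.exp (∑' x, eulerLogTerm z x)) := by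
  have norm_pow_lt (i : ℕ) : ‖z ^ (i + 1)‖ < 1 := by
    rw [norm_pow]
    exact pow_lt_one₀ (norm_nonneg z) hz i.succ_ne_zero
  have row (i : ℕ) : HasSum (fun k ↦ eulerLogTerm z (i, k)) (-Complex.log (1 - z ^ (i + 1))) := by
    have h := (hasSum_nat_add_iff' 1).2 (Complex.hasSum_taylorSeries_neg_log (norm_pow_lt i))
    simpa [eulerLogTerm, pow_mul] using h
  refine ((summable_eulerLogTerm hz).hasSum.prod_fiberwise row).cexp.congr_fun fun i ↦ ?_
  have ne_zero : 1 - z ^ (i + 1) ≠ 0 := sub_ne_zero.2 fun h ↦ by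
    simpa [← h] using norm_pow_lt i
  rw [Function.comp_apply, Complex.exp_neg, Complex.exp_log ne_zero]

lemma summable_card_partition_mul_pow {r : ℝ} (hr0 : 0 ≤ r) (hr1 : r < 1) :
    Summable fun n ↦ (Fintype.card n.Partition : ℝ) * r ^ n := by
  have hr : ‖(r : ℂ)‖ < 1 := by rwa [Complex.norm_of_nonneg hr0]
  obtain ⟨C, hC⟩ := (hasProd_inv_one_sub_pow hr).tendsto_prod_nat.norm.bddAbove_range
  refine summable_of_sum_range_le (c := C) (fun n ↦ by positivity) fun K ↦ ?_
  calc ∑ n ∈ Finset.range K, (Fintype.card n.Partition : ℝ) * r ^ n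
      ≤ ∏ i ∈ Finset.range K, (1 - r ^ (i + 1))⁻¹ := sum_card_partition_mul_pow_le K hr0 hr1
    _ ≤ ‖((∏ i ∈ Finset.range K, (1 - r ^ (i + 1))⁻¹ : ℝ) : ℂ)‖ := by
        rw [Complex.norm_real]
        exact le_abs_self _
    _ ≤ C := by
        push_cast
        exact hC ⟨K, rfl⟩

/- The partitions of `n` into parts `≤ M` are eventually all partitions of `n`, so dominated
convergence applies to the finite products. -/
lemma hasSum_card_partition_mul_pow {z : ℂ} (hz : ‖z‖ < 1) :
    HasSum (fun n ↦ (Fintype.card n.Partition : ℂ) * z ^ n)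
      (Complex.exp (∑' x, eulerLogTerm z x)) := by
  have dominating := summable_card_partition_mul_pow (norm_nonneg z) hz
  have limit := tendsto_tsum_of_dominated_convergence (𝓕 := atTop)
    (f := fun M n ↦ ((Nat.Partition.restricted n (· ≤ M)).card : ℂ) * z ^ n)
    (g := fun n ↦ (Fintype.card n.Partition : ℂ) * z ^ n) dominating
    (fun n ↦ tendsto_const_nhds.congr' <| (eventually_ge_atTop n).mono fun M hM ↦ by
      simp only [card_restricted_le_of_le hM])
    (.of_forall fun M n ↦ by
      rw [norm_mul, norm_pow, Complex.norm_natCast]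
      gcongr
      exact Finset.card_le_univ _)
  have finite_product (M : ℕ) := (hasAbsEval_card_restricted_le M hz).2.tsum_eq
  simp only [coeff_mk] at finite_product
  simp only [finite_product] at limit
  rw [tendsto_nhds_unique (hasProd_inv_one_sub_pow hz).tendsto_prod_nat limit]
  refine (Summable.of_norm (dominating.congr fun n ↦ ?_)).hasSum
  rw [norm_mul, norm_pow, Complex.norm_natCast]

end PartitionGeneratingFunction

section EulerWeights

lemma hasSum_exp_neg_succ_mul {x : ℝ} (hx : 0 < x) :
    HasSum (fun j : ℕ ↦ Real.exp (-((j + 1) * x))) (Real.exp (-x) / (1 - Real.exp (-x))) := by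
  have exp_lt : Real.exp (-x) < 1 := Real.exp_lt_one_iff.2 (neg_lt_zero.2 hx)
  have geometric := (hasSum_geometric_of_lt_one (Real.exp_pos _).le exp_lt).mul_left (Real.exp (-x))
  rw [← div_eq_mul_inv] at geometric
  refine geometric.congr_fun fun j ↦ ?_
  rw [← Real.exp_nat_mul, ← Real.exp_add]
  ring_nf

lemma hasSum_succ_mul_exp_neg_succ_mul {x : ℝ} (hx : 0 < x) :
    HasSum (fun j : ℕ ↦ (j + 1) * Real.exp (-((j + 1) * x)))
      (Real.exp (-x) / (1 - Real.exp (-x)) ^ 2) := by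
  have norm_exp_lt : ‖Real.exp (-x)‖ < 1 := by
    rw [Real.norm_of_nonneg (Real.exp_pos _).le]
    exact Real.exp_lt_one_iff.2 (neg_lt_zero.2 hx)
  have unshifted : HasSum (fun n : ℕ ↦ (n : ℝ) * Real.exp (-x) ^ n)
      (Real.exp (-x) / (1 - Real.exp (-x)) ^ 2) :=
    hasSum_coe_mul_geometric_of_norm_lt_one norm_exp_lt
  have shifted : HasSum (fun j : ℕ ↦ ((j + 1 : ℕ) : ℝ) * Real.exp (-x) ^ (j + 1))
      (Real.exp (-x) / (1 - Real.exp (-x)) ^ 2) := by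
    simpa using (hasSum_nat_add_iff' 1).2 unshifted
  refine shifted.congr_fun fun j ↦ ?_
  rw [← Real.exp_nat_mul]
  push_cast
  ring_nf

lemma exp_neg_div_one_sub_exp_neg_le {x : ℝ} (hx : 0 < x) :
    Real.exp (-x) / (1 - Real.exp (-x)) ≤ 1 / x := by
  have exp_lt : Real.exp (-x) < 1 := Real.exp_lt_one_iff.2 (neg_lt_zero.2 hx)
  have mul_exp_le : Real.exp (-x) * (x + 1) ≤ 1 := by
    calc Real.exp (-x) * (x + 1) ≤ Real.exp (-x) * Real.exp x := by
          gcongr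
          exact Real.add_one_le_exp x
      _ = 1 := by rw [← Real.exp_add, neg_add_cancel, Real.exp_zero]
  rw [div_le_div_iff₀ (sub_pos.2 exp_lt) hx]
  linarith

/-- The frequency `j * k` of the term of `log ∏ (1 - z ^ j)⁻¹` indexed by `(j - 1, k - 1)`. -/
def eulerFreq (x : ℕ × ℕ) : ℝ := (x.1 + 1) * (x.2 + 1)

/-- The modulus `e ^ (-j k d) / k`, on the circle `‖z‖ = e ^ (-d)`, of the term of
`log ∏ (1 - z ^ j)⁻¹` indexed by `(j - 1, k - 1)`. -/
noncomputable def eulerWeight (d : ℝ) (x : ℕ × ℕ) : ℝ :=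
  Real.exp (-(eulerFreq x * d)) / (x.2 + 1)

lemma eulerFreq_nonneg : 0 ≤ eulerFreq := fun x ↦ by
  rw [Pi.zero_apply, eulerFreq]
  positivity

lemma eulerWeight_nonneg (d : ℝ) : 0 ≤ eulerWeight d := fun x ↦ by
  rw [Pi.zero_apply, eulerWeight]
  positivity

lemma eulerLogTerm_exp_neg_mul_exp_mul_I (d θ : ℝ) (x : ℕ × ℕ) :
    eulerLogTerm (Real.exp (-d) * Complex.exp (θ * Complex.I)) x =
      eulerWeight d x * Complex.exp (eulerFreq x * θ * Complex.I) := by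
  rw [eulerLogTerm, eulerWeight, eulerFreq, Complex.ofReal_exp, ← Complex.exp_add,
    ← Complex.exp_nat_mul]
  push_cast
  rw [div_mul_eq_mul_div, ← Complex.exp_add]
  ring_nf

lemma eulerLogTerm_exp_neg (d : ℝ) (x : ℕ × ℕ) :
    eulerLogTerm (Real.exp (-d)) x = eulerWeight d x := by
  simpa using eulerLogTerm_exp_neg_mul_exp_mul_I d 0 x

variable {d : ℝ}

lemma norm_ofReal_exp_neg_lt_one (hd : 0 < d) : ‖(Real.exp (-d) : ℂ)‖ < 1 := by
  rw [Complex.norm_of_nonneg (Real.exp_pos _).le]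
  exact Real.exp_lt_one_iff.2 (neg_lt_zero.2 hd)

lemma summable_eulerWeight (hd : 0 < d) : Summable (eulerWeight d) :=
  Complex.summable_ofReal.1 <|
    (summable_eulerLogTerm (norm_ofReal_exp_neg_lt_one hd)).congr (eulerLogTerm_exp_neg d)

lemma tsum_eulerWeight_le (hd : 0 < d) : ∑' x, eulerWeight d x ≤ Real.pi ^ 2 / 6 / d := by
  have column (k : ℕ) : HasSum (fun j ↦ eulerWeight d (j, k))
      (Real.exp (-((k + 1) * d)) / (1 - Real.exp (-((k + 1) * d))) / (k + 1)) := by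
    refine ((hasSum_exp_neg_succ_mul (x := (k + 1) * d) (by positivity)).div_const
      (k + 1 : ℝ)).congr_fun fun j ↦ ?_
    rw [eulerWeight, eulerFreq, mul_assoc]
  have columns := ((Equiv.prodComm ℕ ℕ).hasSum_iff.2
    (summable_eulerWeight hd).hasSum).prod_fiberwise column
  have zeta_two := ((hasSum_nat_add_iff' 1).2 hasSum_zeta_two).div_const d
  simp only [Finset.sum_range_one, Nat.cast_zero, Nat.cast_add_one, ne_eq, two_ne_zero,
    not_false_eq_true, zero_pow, div_zero, sub_zero] at zeta_two
  refine hasSum_le (fun k ↦ ?_) columns zeta_two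
  calc _ ≤ 1 / ((k + 1) * d) / (k + 1) := by
        exact div_le_div_of_nonneg_right (exp_neg_div_one_sub_exp_neg_le (by positivity))
          (by positivity)
    _ = 1 / (k + 1) ^ 2 / d := by field_simp

/- Half of the exponential decay absorbs the power of the frequency. -/
lemma eulerFreq_pow_mul_eulerWeight_le (hd : 0 < d) (p : ℕ) (x : ℕ × ℕ) :
    eulerFreq x ^ p * eulerWeight d x ≤ p.factorial * (2 / d) ^ p * eulerWeight (d / 2) x := by
  set m := eulerFreq x with hm
  have hm0 : 0 ≤ m := eulerFreq_nonneg x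
  have pow_le : m ^ p ≤ p.factorial * (2 / d) ^ p * Real.exp (m * (d / 2)) := by
    have h := Real.pow_div_factorial_le_exp (m * (d / 2)) (by positivity) p
    rw [div_le_iff₀ (by positivity)] at h
    calc m ^ p = (2 / d) ^ p * (m * (d / 2)) ^ p := by
          rw [← mul_pow]
          congr 1
          field_simp
      _ ≤ (2 / d) ^ p * (Real.exp (m * (d / 2)) * p.factorial) := by gcongr
      _ = _ := by ring
  calc m ^ p * eulerWeight d x
      ≤ p.factorial * (2 / d) ^ p * Real.exp (m * (d / 2)) * eulerWeight d x := by
        gcongr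
        exact eulerWeight_nonneg d x
    _ = p.factorial * (2 / d) ^ p * eulerWeight (d / 2) x := by
        rw [mul_assoc _ (Real.exp _), eulerWeight, eulerWeight, ← hm, mul_div_assoc',
          ← Real.exp_add]
        ring_nf

lemma summable_eulerFreq_pow_mul_eulerWeight (hd : 0 < d) (p : ℕ) :
    Summable fun x ↦ eulerFreq x ^ p * eulerWeight d x :=
  ((summable_eulerWeight (half_pos hd)).mul_left _).of_nonneg_of_le
    (fun x ↦ mul_nonneg (pow_nonneg (eulerFreq_nonneg x) p) (eulerWeight_nonneg d x))
    (eulerFreq_pow_mul_eulerWeight_le hd p)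

lemma summable_eulerFreq_mul_eulerWeight (hd : 0 < d) :
    Summable fun x ↦ eulerFreq x * eulerWeight d x := by
  simpa only [pow_one] using summable_eulerFreq_pow_mul_eulerWeight hd 1

lemma weightedMoment_eulerWeight_le (hd : 0 < d) (p : ℕ) :
    weightedMoment (eulerWeight d) eulerFreq p ≤
      p.factorial * (2 / d) ^ (p + 1) * (Real.pi ^ 2 / 6) := by
  calc weightedMoment (eulerWeight d) eulerFreq p
      ≤ ∑' x, p.factorial * (2 / d) ^ p * eulerWeight (d / 2) x :=
        (summable_eulerFreq_pow_mul_eulerWeight hd p).tsum_le_tsum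
          (eulerFreq_pow_mul_eulerWeight_le hd p) ((summable_eulerWeight (half_pos hd)).mul_left _)
    _ ≤ p.factorial * (2 / d) ^ p * (Real.pi ^ 2 / 6 / (d / 2)) := by
        rw [tsum_mul_left]
        gcongr
        exact tsum_eulerWeight_le (half_pos hd)
    _ = p.factorial * (2 / d) ^ (p + 1) * (Real.pi ^ 2 / 6) := by
        rw [pow_succ, div_div_eq_mul_div]
        ring

lemma gR_exp_neg_eq (hd : 0 < d) :
    gR (Real.exp (-d)) = Real.exp (weightedMoment (eulerWeight d) eulerFreq 0) := by
  have complex_product := hasProd_inv_one_sub_pow (norm_ofReal_exp_neg_lt_one hd)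
  rw [tsum_congr (eulerLogTerm_exp_neg d), ← Complex.ofReal_tsum, ← Complex.ofReal_exp]
    at complex_product
  have real_product : HasProd (fun j : ℕ ↦ (1 - Real.exp (-d) ^ (j + 1))⁻¹)
      (Real.exp (∑' x, eulerWeight d x)) := by
    refine (Complex.isUniformEmbedding_ofReal.isInducing.hasProd_iff
      (g := Complex.ofRealHom) _ _).1 (complex_product.congr_fun fun j ↦ ?_)
    simp
  simpa [gR, weightedMoment] using real_product.tprod_eq

lemma aFun_eq_weightedMoment_one (hd : 0 < d) :
    aFun d = weightedMoment (eulerWeight d) eulerFreq 1 := by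
  have row (j : ℕ) : HasSum (fun k ↦ eulerFreq (j, k) ^ 1 * eulerWeight d (j, k))
      ((j + 1) * Real.exp (-(j + 1) * d) / (1 - Real.exp (-(j + 1) * d))) := by
    have h := (hasSum_exp_neg_succ_mul (x := (j + 1) * d) (by positivity)).mul_left (j + 1 : ℝ)
    rw [← mul_div_assoc, ← neg_mul] at h
    refine h.congr_fun fun k ↦ ?_
    rw [eulerWeight, eulerFreq]
    field_simp
  exact ((summable_eulerFreq_pow_mul_eulerWeight hd 1).hasSum.prod_fiberwise row).tsum_eq

lemma hasSum_bFun (hd : 0 < d) :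
    HasSum (fun j : ℕ ↦
        (j + 1 : ℝ) ^ 2 * Real.exp (-(j + 1) * d) / (1 - Real.exp (-(j + 1) * d)) ^ 2)
      (weightedMoment (eulerWeight d) eulerFreq 2) := by
  have row (j : ℕ) : HasSum (fun k ↦ eulerFreq (j, k) ^ 2 * eulerWeight d (j, k))
      ((j + 1) ^ 2 * Real.exp (-(j + 1) * d) / (1 - Real.exp (-(j + 1) * d)) ^ 2) := by
    have h := (hasSum_succ_mul_exp_neg_succ_mul (x := (j + 1) * d) (by positivity)).mul_left
      ((j + 1 : ℝ) ^ 2)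
    rw [← mul_div_assoc, ← neg_mul] at h
    refine h.congr_fun fun k ↦ ?_
    rw [eulerWeight, eulerFreq]
    field_simp
  exact (summable_eulerFreq_pow_mul_eulerWeight hd 2).hasSum.prod_fiberwise row

lemma bFun_eq_weightedMoment_two (hd : 0 < d) :
    bFun d = weightedMoment (eulerWeight d) eulerFreq 2 :=
  (hasSum_bFun hd).tsum_eq

end EulerWeights

section Variance

variable {d : ℝ}

lemma exp_neg_div_pow_three_le_bFun (hd : 0 < d) : Real.exp (-d) / d ^ 3 ≤ bFun d := by
  have one_sub_exp_le (x : ℝ) : 1 - Real.exp (-x) ≤ x := by linarith [Real.one_sub_le_exp_neg x]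
  have one_sub_exp_pos {x : ℝ} (hx : 0 < x) : 0 < 1 - Real.exp (-x) :=
    sub_pos.2 (Real.exp_lt_one_iff.2 (neg_lt_zero.2 hx))
  have termwise (j : ℕ) : Real.exp (-((j + 1) * d)) / d ^ 2 ≤
      (j + 1) ^ 2 * Real.exp (-(j + 1) * d) / (1 - Real.exp (-(j + 1) * d)) ^ 2 := by
    have hx : 0 < (j + 1) * d := by positivity
    rw [neg_mul]
    calc Real.exp (-((j + 1) * d)) / d ^ 2
        = (j + 1) ^ 2 * Real.exp (-((j + 1) * d)) / ((j + 1) * d) ^ 2 := by field_simp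
      _ ≤ _ := div_le_div_of_nonneg_left (by positivity) (pow_pos (one_sub_exp_pos hx) 2)
          (pow_le_pow_left₀ (one_sub_exp_pos hx).le (one_sub_exp_le _) 2)
  calc Real.exp (-d) / d ^ 3 = Real.exp (-d) / d / d ^ 2 := by rw [div_div, ← pow_succ']
    _ ≤ Real.exp (-d) / (1 - Real.exp (-d)) / d ^ 2 :=
        div_le_div_of_nonneg_right (div_le_div_of_nonneg_left (Real.exp_pos _).le
          (one_sub_exp_pos hd) (one_sub_exp_le d)) (by positivity)
    _ ≤ weightedMoment (eulerWeight d) eulerFreq 2 :=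
        hasSum_le termwise ((hasSum_exp_neg_succ_mul hd).div_const _) (hasSum_bFun hd)
    _ = bFun d := (bFun_eq_weightedMoment_two hd).symm

lemma third_le_exp_neg (hd1 : d ≤ 1) : 1 / 3 ≤ Real.exp (-d) := by
  rw [Real.exp_neg, ← one_div]
  exact one_div_le_one_div_of_le (Real.exp_pos d)
    ((Real.exp_le_exp.2 hd1).trans (by linarith [Real.exp_one_lt_d9]))

lemma inv_le_bFun (hd : 0 < d) (hd1 : d ≤ 1) : (3 * d ^ 3)⁻¹ ≤ bFun d := by
  refine le_trans ?_ (exp_neg_div_pow_three_le_bFun hd)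
  rw [mul_inv, ← one_div, ← div_eq_mul_inv]
  gcongr
  exact third_le_exp_neg hd1

lemma bFun_pos (hd : 0 < d) : 0 < bFun d :=
  lt_of_lt_of_le (by positivity) (exp_neg_div_pow_three_le_bFun hd)

lemma bFun_le (hd : 0 < d) : bFun d ≤ 8 / 3 * Real.pi ^ 2 / d ^ 3 := by
  rw [bFun_eq_weightedMoment_two hd]
  refine (weightedMoment_eulerWeight_le hd 2).trans_eq ?_
  rw [Nat.factorial_two]
  push_cast
  ring

lemma tendsto_sqrt_bFun_atTop : Tendsto (fun d ↦ √(bFun d)) (𝓝[>] 0) atTop := by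
  refine Real.tendsto_sqrt_atTop.comp ?_
  have cube : Tendsto (fun d : ℝ ↦ 3⁻¹ * d⁻¹ ^ 3) (𝓝[>] 0) atTop :=
    ((tendsto_pow_atTop three_ne_zero).comp tendsto_inv_nhdsGT_zero).const_mul_atTop (by norm_num)
  refine tendsto_atTop_mono' _ ?_ cube
  filter_upwards [Ioc_mem_nhdsGT one_pos] with d hd
  rw [inv_pow, ← mul_inv]
  exact inv_le_bFun hd.1 hd.2

lemma tendsto_eulerWeight_lyapunov_ratio :
    Tendsto (fun d ↦ weightedMoment (eulerWeight d) eulerFreq 3 /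
      √(weightedMoment (eulerWeight d) eulerFreq 2) ^ 3) (𝓝[>] 0) (𝓝 0) := by
  have third_nonneg (d : ℝ) : 0 ≤ weightedMoment (eulerWeight d) eulerFreq 3 :=
    weightedMoment_nonneg (eulerWeight_nonneg d) eulerFreq_nonneg 3
  have ratio_nonneg (d : ℝ) : 0 ≤ weightedMoment (eulerWeight d) eulerFreq 3 /
      √(weightedMoment (eulerWeight d) eulerFreq 2) ^ 3 :=
    div_nonneg (third_nonneg d) (by positivity)
  have sqrt_tendsto : Tendsto (fun d ↦ √((16 * Real.pi ^ 2) ^ 2 * 27 * d)) (𝓝[>] 0) (𝓝 0) := by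
    have h : ContinuousAt (fun d ↦ √((16 * Real.pi ^ 2) ^ 2 * 27 * d)) 0 := by fun_prop
    simpa using h.tendsto.mono_left nhdsWithin_le_nhds
  refine squeeze_zero' (.of_forall ratio_nonneg) ?_ sqrt_tendsto
  filter_upwards [Ioc_mem_nhdsGT one_pos] with d ⟨hd, hd1⟩
  refine Real.le_sqrt_of_sq_le ?_
  have third_le : weightedMoment (eulerWeight d) eulerFreq 3 ≤ 16 * Real.pi ^ 2 / d ^ 4 := by
    refine (weightedMoment_eulerWeight_le hd 3).trans_eq ?_
    norm_num [Nat.factorial]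
    ring
  rw [← bFun_eq_weightedMoment_two hd, div_pow, ← pow_mul, mul_comm 3 2, pow_mul,
    Real.sq_sqrt (bFun_pos hd).le]
  calc weightedMoment (eulerWeight d) eulerFreq 3 ^ 2 / bFun d ^ 3
      ≤ (16 * Real.pi ^ 2 / d ^ 4) ^ 2 / (3 * d ^ 3)⁻¹ ^ 3 := by
        gcongr
        · exact third_nonneg d
        · exact inv_le_bFun hd hd1
    _ = (16 * Real.pi ^ 2) ^ 2 * 27 * d := by
        field_simp
        ring

end Variance

section Decay

lemma hasSum_geometric_mul_cos {q : ℝ} (hq : |q| < 1) (θ : ℝ) :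
    HasSum (fun n : ℕ ↦ q ^ n * Real.cos (n * θ))
      ((1 - q * Real.cos θ) / (1 - 2 * q * Real.cos θ + q ^ 2)) := by
  have norm_lt : ‖(q : ℂ) * Complex.exp (θ * Complex.I)‖ < 1 := by
    rwa [norm_mul, Complex.norm_exp_ofReal_mul_I, mul_one, Complex.norm_real]
  convert! Complex.hasSum_re (hasSum_geometric_of_norm_lt_one norm_lt) using 1
  · ext n
    rw [mul_pow, ← Complex.exp_nat_mul, ← Complex.ofReal_pow, Complex.re_ofReal_mul,
      ← mul_assoc, ← Complex.ofReal_natCast, ← Complex.ofReal_mul, Complex.exp_ofReal_mul_I_re]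
  · rw [Complex.inv_re, Complex.normSq_apply]
    simp only [Complex.sub_re, Complex.sub_im, Complex.one_re, Complex.one_im,
      Complex.re_ofReal_mul, Complex.im_ofReal_mul, Complex.exp_ofReal_mul_I_re,
      Complex.exp_ofReal_mul_I_im]
    congr 1
    linear_combination (-q ^ 2) * Real.sin_sq_add_cos_sq θ

lemma div_le_tsum_geometric_mul_one_sub_cos {q u v θ : ℝ} (hq : 1 / 4 ≤ q) (hq1 : q < 1)
    (hu : 1 - q ≤ u) (hv : 0 ≤ v) (hvθ : v ≤ (1 - Real.cos θ) / 2) :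
    v / (2 * u * (u ^ 2 + v)) ≤ ∑' n : ℕ, q ^ n * (1 - Real.cos (n * θ)) := by
  set X := 2 * q * (1 - Real.cos θ) with hX
  have hs : 0 < 1 - q := sub_pos.2 hq1
  have hvX : v ≤ X := by nlinarith
  have hX0 : 0 ≤ X := hv.trans hvX
  have closed_form : HasSum (fun n : ℕ ↦ q ^ n * (1 - Real.cos (n * θ)))
      (X * (1 + q) / (2 * (1 - q) * ((1 - q) ^ 2 + X))) := by
    have h := (hasSum_geometric_of_lt_one (by linarith) hq1).sub
      (hasSum_geometric_mul_cos (abs_lt.2 ⟨by linarith, hq1⟩) θ)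
    have denominator : 1 - 2 * q * Real.cos θ + q ^ 2 = (1 - q) ^ 2 + X := by
      rw [hX]
      ring
    have value : X * (1 + q) / (2 * (1 - q) * ((1 - q) ^ 2 + X)) =
        (1 - q)⁻¹ - (1 - q * Real.cos θ) / (1 - 2 * q * Real.cos θ + q ^ 2) := by
      rw [denominator]
      field_simp
      rw [hX]
      ring
    rw [value]
    exact h.congr_fun fun n ↦ by ring
  have hu0 : 0 < u := hs.trans_le hu
  rw [closed_form.tsum_eq]
  calc v / (2 * u * (u ^ 2 + v)) ≤ X / (2 * u * (u ^ 2 + X)) := by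
        rw [div_le_div_iff₀ (by positivity) (by positivity)]
        nlinarith [mul_le_mul_of_nonneg_right hvX (by positivity : 0 ≤ 2 * u * u ^ 2)]
    _ ≤ X / (2 * (1 - q) * ((1 - q) ^ 2 + X)) := by gcongr
    _ ≤ X * (1 + q) / (2 * (1 - q) * ((1 - q) ^ 2 + X)) := by
        gcongr
        nlinarith

variable {d θ : ℝ}

lemma one_sub_cos_nonneg (x : ℝ) : 0 ≤ 1 - Real.cos x := sub_nonneg.2 (Real.cos_le_one x)

lemma summable_eulerWeight_mul_one_sub_cos (hd : 0 < d) (θ : ℝ) :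
    Summable fun x ↦ eulerWeight d x * (1 - Real.cos (eulerFreq x * θ)) :=
  ((summable_eulerWeight hd).mul_right 2).of_nonneg_of_le
    (fun x ↦ mul_nonneg (eulerWeight_nonneg d x) (one_sub_cos_nonneg _))
    fun x ↦ mul_le_mul_of_nonneg_left (by linarith [Real.neg_one_le_cos (eulerFreq x * θ)])
      (eulerWeight_nonneg d x)

/- The left side collects the terms of the right side with `k = 1`. -/
lemma tsum_geometric_mul_one_sub_cos_le (hd : 0 < d) (θ : ℝ) :
    ∑' n : ℕ, Real.exp (-d) ^ n * (1 - Real.cos (n * θ)) ≤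
      ∑' x, eulerWeight d x * (1 - Real.cos (eulerFreq x * θ)) := by
  let f (n : ℕ) : ℝ := Real.exp (-d) ^ n * (1 - Real.cos (n * θ))
  have row_injective : Function.Injective fun j : ℕ ↦ (j, 0) := Prod.mk_left_injective 0
  have row_term (j : ℕ) :
      eulerWeight d (j, 0) * (1 - Real.cos (eulerFreq (j, 0) * θ)) = f (j + 1) := by
    simp only [f]
    rw [eulerWeight, eulerFreq, ← Real.exp_nat_mul]
    push_cast
    ring_nf
  have summable_row : Summable fun j ↦ f (j + 1) :=
    ((summable_eulerWeight_mul_one_sub_cos hd θ).comp_injective row_injective).congr row_term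
  calc ∑' n, f n = ∑' j, f (j + 1) := by
        rw [((summable_nat_add_iff (f := f) 1).1 summable_row).tsum_eq_zero_add]
        simp [f]
    _ = ∑' j, eulerWeight d (j, 0) * (1 - Real.cos (eulerFreq (j, 0) * θ)) :=
        (tsum_congr row_term).symm
    _ ≤ ∑' x, eulerWeight d x * (1 - Real.cos (eulerFreq x * θ)) :=
        tsum_comp_le_tsum_of_inj (summable_eulerWeight_mul_one_sub_cos hd θ)
          (fun x ↦ mul_nonneg (eulerWeight_nonneg d x) (one_sub_cos_nonneg _)) row_injective

lemma div_le_tsum_eulerWeight_mul_one_sub_cos (hd : 0 < d) (hd1 : d ≤ 1) (hθ : |θ| ≤ Real.pi) :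
    (θ / Real.pi) ^ 2 / (2 * d * (d ^ 2 + (θ / Real.pi) ^ 2)) ≤
      ∑' x, eulerWeight d x * (1 - Real.cos (eulerFreq x * θ)) := by
  have quarter_le : 1 / 4 ≤ Real.exp (-d) := by linarith [third_le_exp_neg hd1]
  have cos_le : (θ / Real.pi) ^ 2 ≤ (1 - Real.cos θ) / 2 := by
    have h := Real.cos_le_one_sub_mul_cos_sq hθ
    rw [div_mul_eq_mul_div, mul_div_assoc, ← div_pow] at h
    linarith
  exact (div_le_tsum_geometric_mul_one_sub_cos quarter_le
    (Real.exp_lt_one_iff.2 (neg_lt_zero.2 hd)) (by linarith [Real.one_sub_le_exp_neg d])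
    (by positivity) cos_le).trans (tsum_geometric_mul_one_sub_cos_le hd θ)

lemma div_pow_three_le_mul_exp {v : ℝ} (hd : 0 < d) (hv : 0 ≤ v) (hv1 : v ≤ 1) :
    v / d ^ 3 ≤ 384 * Real.exp (v / (2 * d * (d ^ 2 + v))) := by
  rcases le_total v (d ^ 2) with hvd | hvd
  · have exponent_ge : v / d ^ 3 / 4 ≤ v / (2 * d * (d ^ 2 + v)) := by
      rw [div_div]
      exact div_le_div_of_nonneg_left hv (by positivity) (by nlinarith)
    have exp_ge := Real.add_one_le_exp (v / (2 * d * (d ^ 2 + v)))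
    linarith [Real.exp_pos (v / (2 * d * (d ^ 2 + v)))]
  · have hv0 : 0 < v := (by positivity : 0 < d ^ 2).trans_le hvd
    have exponent_ge : 1 / (4 * d) ≤ v / (2 * d * (d ^ 2 + v)) := by
      rw [div_le_div_iff₀ (by positivity) (by positivity)]
      nlinarith
    calc v / d ^ 3 ≤ 1 / d ^ 3 := by gcongr
      _ = 384 * ((1 / (4 * d)) ^ 3 / (3 : ℕ).factorial) := by
          norm_num [Nat.factorial]
          ring
      _ ≤ 384 * Real.exp (1 / (4 * d)) := by
          gcongr
          exact Real.pow_div_factorial_le_exp _ (by positivity) 3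
      _ ≤ _ := by gcongr

lemma norm_exp_centeredExponent_eulerWeight_le (hd : 0 < d) (hd1 : d ≤ 1) (hθ : |θ| ≤ Real.pi) :
    ‖Complex.exp (centeredExponent (eulerWeight d) eulerFreq θ)‖ ≤
      (1 + 1024 * Real.pi ^ 4) * (1 + (√(bFun d) * θ) ^ 2)⁻¹ := by
  rw [norm_exp_centeredExponent (summable_eulerWeight hd) (summable_eulerFreq_mul_eulerWeight hd),
    Real.exp_neg, ← div_eq_mul_inv, inv_le_comm₀ (Real.exp_pos _) (by positivity), inv_div,
    div_le_iff₀ (by positivity), mul_pow, Real.sq_sqrt (bFun_pos hd).le]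
  set S := ∑' x, eulerWeight d x * (1 - Real.cos (eulerFreq x * θ))
  set v := (θ / Real.pi) ^ 2 with hv
  have exponent_le : v / (2 * d * (d ^ 2 + v)) ≤ S :=
    div_le_tsum_eulerWeight_mul_one_sub_cos hd hd1 hθ
  have hv1 : v ≤ 1 := by
    rw [hv, sq_le_one_iff_abs_le_one, abs_div, abs_of_pos Real.pi_pos]
    exact div_le_one_of_le₀ hθ Real.pi_pos.le
  have one_le : 1 ≤ Real.exp S := Real.one_le_exp (le_trans (by positivity) exponent_le)
  have variance_le : bFun d * θ ^ 2 ≤ 1024 * Real.pi ^ 4 * Real.exp S := by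
    calc bFun d * θ ^ 2 ≤ 8 / 3 * Real.pi ^ 2 / d ^ 3 * θ ^ 2 := by
          gcongr
          exact bFun_le hd
      _ = 8 / 3 * Real.pi ^ 4 * (v / d ^ 3) := by
          rw [hv]
          field_simp
      _ ≤ 8 / 3 * Real.pi ^ 4 * (384 * Real.exp S) := by
          gcongr
          exact (div_pow_three_le_mul_exp hd (by positivity) hv1).trans (by gcongr)
      _ = 1024 * Real.pi ^ 4 * Real.exp S := by ring
  linarith

end Decay

section SaddlePoint

open Complex

lemma tendsto_exp_centeredExponent_eulerWeight (t : ℝ) :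
    Tendsto (fun d ↦ exp (centeredExponent (eulerWeight d) eulerFreq (t / √(bFun d)))) (𝓝[>] 0)
      (𝓝 (Real.exp (-(1 / 2) * t ^ 2) : ℝ)) := by
  have bFun_eq : ∀ᶠ d in 𝓝[>] 0, weightedMoment (eulerWeight d) eulerFreq 2 = bFun d :=
    eventually_mem_nhdsWithin.mono fun _ hd ↦ (bFun_eq_weightedMoment_two hd).symm
  have variance_pos : ∀ᶠ d in 𝓝[>] 0, 0 < weightedMoment (eulerWeight d) eulerFreq 2 := by
    filter_upwards [bFun_eq, eventually_mem_nhdsWithin] with d h hd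
    exact h ▸ bFun_pos hd
  refine (tendsto_exp_centeredExponent_div eulerWeight_nonneg eulerFreq_nonneg
    (eventually_mem_nhdsWithin.mono fun _ ↦ summable_eulerFreq_pow_mul_eulerWeight) variance_pos
    tendsto_eulerWeight_lyapunov_ratio t).congr' ?_
  filter_upwards [bFun_eq] with d h
  rw [h]

lemma tendsto_sqrt_bFun_smul_integral :
    Tendsto (fun d ↦ √(bFun d) • ∫ θ in -Real.pi..Real.pi,
      exp (centeredExponent (eulerWeight d) eulerFreq θ)) (𝓝[>] 0) (𝓝 (√(2 * Real.pi) : ℝ)) := by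
  have gaussian : ∫ t : ℝ, ((Real.exp (-(1 / 2) * t ^ 2) : ℝ) : ℂ) = (√(2 * Real.pi) : ℝ) := by
    rw [integral_complex_ofReal, integral_gaussian, div_div_eq_mul_div, div_one, mul_comm]
  rw [← gaussian]
  refine tendsto_smul_integral_of_rescaled_dominated Real.pi_pos tendsto_sqrt_bFun_atTop ?_
    (integrable_inv_one_add_sq.const_mul (1 + 1024 * Real.pi ^ 4)) ?_
    tendsto_exp_centeredExponent_eulerWeight
  · exact eventually_mem_nhdsWithin.mono fun d hd ↦ continuous_exp.comp
      (continuous_centeredExponent (summable_eulerWeight hd)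
        (summable_eulerFreq_mul_eulerWeight hd))
  · filter_upwards [Ioc_mem_nhdsGT one_pos] with d hd θ hθ
    exact norm_exp_centeredExponent_eulerWeight_le hd.1 hd.2 hθ

variable {d : ℝ}

lemma tsum_card_partition_mul_pow_eq (hd : 0 < d) (θ : ℝ) :
    ∑' n : ℕ, (Fintype.card n.Partition : ℂ) * (Real.exp (-d) * exp (θ * I)) ^ n =
      gR (Real.exp (-d)) * exp (centeredExponent (eulerWeight d) eulerFreq θ) *
        exp (aFun d * θ * I) := by
  have norm_lt : ‖(Real.exp (-d) : ℂ) * exp (θ * I)‖ < 1 := by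
    rw [norm_mul, norm_exp_ofReal_mul_I, mul_one]
    exact norm_ofReal_exp_neg_lt_one hd
  rw [(hasSum_card_partition_mul_pow norm_lt).tsum_eq,
    tsum_congr (eulerLogTerm_exp_neg_mul_exp_mul_I d θ),
    tsum_ofReal_mul_exp (summable_eulerWeight hd) (summable_eulerFreq_mul_eulerWeight hd),
    gR_exp_neg_eq hd, aFun_eq_weightedMoment_one hd, ofReal_exp, ← exp_add, ← exp_add]
  ring_nf

/- At the saddle point the oscillating factor `exp (aFun d * θ * I)` of the generating function
cancels the kernel `exp (-n * θ * I)` of Cauchy's formula. -/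
lemma card_partition_mul_exp_eq_integral (hd : 0 < d) {n : ℕ} (hn : aFun d = n) :
    2 * Real.pi * ((Fintype.card n.Partition : ℂ) * Real.exp (-d) ^ n) =
      gR (Real.exp (-d)) *
        ∫ θ in -Real.pi..Real.pi, exp (centeredExponent (eulerWeight d) eulerFreq θ) := by
  have summable_norm :
      Summable fun k ↦ ‖(Fintype.card (Nat.Partition k) : ℂ) * (Real.exp (-d) : ℂ) ^ k‖ :=
    (hasSum_card_partition_mul_pow (norm_ofReal_exp_neg_lt_one hd)).summable.norm
  rw [← integral_tsum_mul_exp_neg summable_norm n, ← intervalIntegral.integral_const_mul]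
  refine intervalIntegral.integral_congr fun θ _ ↦ ?_
  simp only [tsum_card_partition_mul_pow_eq hd θ, hn]
  rw [mul_assoc, ← exp_add, ofReal_natCast, neg_mul, neg_mul, add_neg_cancel, exp_zero, mul_one]

lemma gR_exp_neg_pos (hd : 0 < d) : 0 < gR (Real.exp (-d)) := by
  rw [gR_exp_neg_eq hd]
  exact Real.exp_pos _

lemma card_partition_div_saddle_point (hd : 0 < d) {n : ℕ} (hn : aFun d = n) :
    ((Fintype.card n.Partition /
        (Real.exp (n * d) * gR (Real.exp (-d)) / √(2 * Real.pi * bFun d)) : ℝ) : ℂ) =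
      (√(bFun d) • ∫ θ in -Real.pi..Real.pi,
        exp (centeredExponent (eulerWeight d) eulerFreq θ)) / (√(2 * Real.pi) : ℝ) := by
  have gR_ne_zero : (gR (Real.exp (-d)) : ℂ) ≠ 0 := by exact_mod_cast (gR_exp_neg_pos hd).ne'
  have two_pi_ne_zero : ((√(2 * Real.pi) : ℝ) : ℂ) ≠ 0 := by
    exact_mod_cast (Real.sqrt_pos.2 Real.two_pi_pos).ne'
  have sq_sqrt : ((√(2 * Real.pi) : ℝ) : ℂ) ^ 2 = 2 * Real.pi := by
    exact_mod_cast Real.sq_sqrt Real.two_pi_pos.le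
  have exp_mul : (Real.exp (n * d) : ℂ) * (Real.exp (-d) : ℂ) ^ n = 1 := by
    rw [← ofReal_pow, ← ofReal_mul, ← Real.exp_nat_mul, ← Real.exp_add, mul_neg, add_neg_cancel,
      Real.exp_zero, ofReal_one]
  have exp_ne_zero : (Real.exp (n * d) : ℂ) ≠ 0 := left_ne_zero_of_mul_eq_one exp_mul
  have cauchy := card_partition_mul_exp_eq_integral hd hn
  rw [Real.sqrt_mul Real.two_pi_pos.le, real_smul, ofReal_div, ofReal_div, ofReal_mul, ofReal_mul,
    ofReal_natCast, div_div_eq_mul_div,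
    div_eq_div_iff (mul_ne_zero exp_ne_zero gR_ne_zero) two_pi_ne_zero]
  linear_combination (Fintype.card n.Partition : ℂ) * √(bFun d) * sq_sqrt +
    √(bFun d) * Real.exp (n * d) * cauchy -
    2 * Real.pi * (Fintype.card n.Partition : ℂ) * √(bFun d) * exp_mul

lemma sq_le_div_aFun (hd : 0 < d) (ha : 0 < aFun d) :
    d ^ 2 ≤ 2 * Real.pi ^ 2 / 3 / aFun d := by
  have h := weightedMoment_eulerWeight_le hd 1
  rw [← aFun_eq_weightedMoment_one hd, Nat.factorial_one, Nat.cast_one, one_mul, div_pow,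
    div_mul_eq_mul_div, le_div_iff₀ (by positivity)] at h
  rw [le_div_iff₀ ha]
  linarith

lemma tendsto_nhdsGT_zero_of_aFun_atTop {α : Type*} {l : Filter α} {d : α → ℝ}
    (hd : ∀ᶠ a in l, 0 < d a) (ha : Tendsto (fun a ↦ aFun (d a)) l atTop) :
    Tendsto d l (𝓝[>] 0) := by
  refine tendsto_nhdsWithin_iff.2 ⟨?_, hd⟩
  have sq_tendsto : Tendsto (fun a ↦ d a ^ 2) l (𝓝 0) := by
    refine squeeze_zero' (.of_forall fun a ↦ sq_nonneg _) ?_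
      (ha.const_div_atTop (2 * Real.pi ^ 2 / 3))
    filter_upwards [hd, ha.eventually_gt_atTop 0] with a using sq_le_div_aFun
  have sqrt_tendsto := sq_tendsto.sqrt
  rw [Real.sqrt_zero] at sqrt_tendsto
  exact sqrt_tendsto.congr' (hd.mono fun a h ↦ Real.sqrt_sq h.le)

end SaddlePoint

/-- **Saddle point formula for `p(n)`** (formula (25) of the paper, Hayman's theorem
applied to the Euler product): with `d_n` the unique positive solution of
`Σ_{j≥1} j·e^{−jd}/(1 − e^{−jd}) = n` and `b_n = Σ_{j≥1} j²·e^{−j d_n}/(1 − e^{−j d_n})²`,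
`p(n) ∼ e^{n d_n}·g(e^{−d_n})/√(2π·b_n)` as `n → ∞`. -/
theorem partition_count_saddle_point (d : ℕ → ℝ)
    (hd : ∀ n : ℕ, 0 < n → 0 < d n ∧ aFun (d n) = n) :
    Asymptotics.IsEquivalent atTop
      (fun n : ℕ => (Fintype.card (Nat.Partition n) : ℝ))
      (fun n : ℕ =>
        Real.exp (n * d n) * gR (Real.exp (-(d n))) /
          Real.sqrt (2 * Real.pi * bFun (d n))) := by
  have eventually_saddle : ∀ᶠ n in atTop, 0 < d n ∧ aFun (d n) = n :=
    (eventually_gt_atTop 0).mono hd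
  have d_tendsto : Tendsto d atTop (𝓝[>] 0) :=
    tendsto_nhdsGT_zero_of_aFun_atTop (eventually_saddle.mono fun _ ↦ And.left)
      (tendsto_natCast_atTop_atTop.congr' (eventually_saddle.mono fun _ h ↦ h.2.symm))
  have sqrt_two_pi_ne_zero : ((√(2 * Real.pi) : ℝ) : ℂ) ≠ 0 :=
    Complex.ofReal_ne_zero.2 (Real.sqrt_pos.2 Real.two_pi_pos).ne'
  have ratio_tendsto := (tendsto_sqrt_bFun_smul_integral.comp d_tendsto).div_const
    ((√(2 * Real.pi) : ℝ) : ℂ)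
  rw [div_self sqrt_two_pi_ne_zero] at ratio_tendsto
  refine isEquivalent_of_tendsto_one (tendsto_ofReal_iff.1 (ratio_tendsto.congr' ?_))
  filter_upwards [eventually_saddle] with n ⟨hpos, hsaddle⟩
  exact (card_partition_div_saddle_point hpos hsaddle).symm
end
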